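/- Let Λ = ω₁ℤ + ω₂ℤ with ω₁ > 0 real, Im ω₂ > 0, and ω₁·Im ω₂ = π/2. For every integer N ≥ 1, every real β > 0, and every choice of points w₁, …, w_N ∈ ℂ, one has 1 ≤ (2/π) ∫_D exp(β U_{ℂ/Λ}(z,w₁) + ⋯ + β U_{ℂ/Λ}(z,w_N)) dA(z) ≤ E(βN, Λ), where D is a fundamental domain of Λ; moreover the upper bound E(βN, Λ) is attained with equality whenever w₁ = ⋯ = w_N. -/

import Mathlib

open MeasureTheory

/-- The lattice `Λ = ω₁ℤ + ω₂ℤ` as a subset of `ℂ`. -/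
def latticeSet (ω₁ ω₂ : ℂ) : Set ℂ :=
  {w : ℂ | ∃ m n : ℤ, w = (m : ℂ) * ω₁ + (n : ℂ) * ω₂}

/-- The Weierstrass sigma function of the lattice `ω₁ℤ + ω₂ℤ`. -/
noncomputable def wSigma (ω₁ ω₂ : ℂ) (z : ℂ) : ℂ :=
  z * ∏' p : {p : ℤ × ℤ // p ≠ 0},
      (1 - z / ((p.1.1 : ℂ) * ω₁ + (p.1.2 : ℂ) * ω₂)) *
        Complex.exp (z / ((p.1.1 : ℂ) * ω₁ + (p.1.2 : ℂ) * ω₂) +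
          z ^ 2 / (2 * ((p.1.1 : ℂ) * ω₁ + (p.1.2 : ℂ) * ω₂) ^ 2))

/-- The Weierstrass zeta function `ζ = σ'/σ`. -/
noncomputable def wZeta (ω₁ ω₂ : ℂ) (z : ℂ) : ℂ :=
  deriv (wSigma ω₁ ω₂) z / wSigma ω₁ ω₂ z

/-- The quasi-period `λ₁ = 2ζ(ω₁/2)`. -/
noncomputable def lambda1 (ω₁ ω₂ : ℂ) : ℂ := 2 * wZeta ω₁ ω₂ (ω₁ / 2)

/-- The constant `b = 1 − λ₁/(2ω₁)`. -/
noncomputable def bconst (ω₁ ω₂ : ℂ) : ℂ := 1 - lambda1 ω₁ ω₂ / (2 * ω₁)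

/-- The modified Weierstrass sigma function `σ_*(z) = e^{b z²} σ(z)`. -/
noncomputable def sigmaStar (ω₁ ω₂ : ℂ) (z : ℂ) : ℂ :=
  Complex.exp (bconst ω₁ ω₂ * z ^ 2) * wSigma ω₁ ω₂ z

/-- A fundamental domain of the lattice `ω₁ℤ + ω₂ℤ`. -/
def fundDomain (ω₁ ω₂ : ℂ) : Set ℂ :=
  (fun p : ℝ × ℝ => (p.1 : ℂ) * ω₁ + (p.2 : ℂ) * ω₂) ''
    (Set.Ico (0 : ℝ) 1 ×ˢ Set.Ico (0 : ℝ) 1)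

/-- The normalizing constant `A_Λ`. -/
noncomputable def Aconst (ω₁ ω₂ : ℂ) : ℝ :=
  2 / Real.pi * ∫ z in fundDomain ω₁ ω₂, (Real.log ‖sigmaStar ω₁ ω₂ z‖ - ‖z‖ ^ 2)

/-- The unipolar Green function of the torus `ℂ/Λ`. -/
noncomputable def Utorus (ω₁ ω₂ : ℂ) (z w : ℂ) : ℝ :=
  Real.log ‖sigmaStar ω₁ ω₂ (z - w)‖ - ‖z - w‖ ^ 2 - Aconst ω₁ ω₂

/-- The monic first degree pseudopolynomial on the torus with root `α`. -/
noncomputable def pseudoPoly (ω₁ ω₂ : ℂ) (α z : ℂ) : ℂ :=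
  Complex.exp (2 * Complex.I * ((((starRingEnd ℂ) α) * z).im : ℂ)) *
    (Complex.exp (-((‖z - α‖ ^ 2 : ℝ) : ℂ)) * sigmaStar ω₁ ω₂ (z - α))

/-- The quantity `E(γ, Λ)`. -/
noncomputable def Etorus (ω₁ ω₂ : ℂ) (γ : ℝ) : ℝ :=
  2 / Real.pi * ∫ z in fundDomain ω₁ ω₂, Real.exp (γ * Utorus ω₁ ω₂ z 0)

/-!
Both bounds are instances of Jensen's inequality for `exp`. Each `U(·, w)` has mean zero, which
gives the lower bound. For the upper bound, the exponential of a convex combination of the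
`γ U(·, w_j)` is at most the same combination of the `exp (γ U(·, w_j))`, and each of these has
mean `E(γ)` by translation invariance.

Translation invariance rests on the `Λ`-periodicity of `U(·, 0)`, that is, on the quasi-periodicity
of `σ` together with Legendre's relation between the quasi-periods. Legendre's relation comes from
comparing the values of a primitive of `ζ` at the ends of two sides of a period parallelogram, in
place of a contour integral. Integrability holds because `exp (γ U(z, 0))` has the order of
`|z| ^ γ` at the origin and `γ > -2`.
-/

/-! ### The sigma function -/

section PrimaryFactor

open Complex

/-- The Weierstrass primary factor of genus two: `primaryFactor (z / l)` is the factor of `σ z` at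
the lattice point `l`. -/
noncomputable def primaryFactor (u : ℂ) : ℂ := (1 - u) * exp (u + u ^ 2 / 2)

@[simp]
lemma primaryFactor_zero : primaryFactor 0 = 1 := by
  simp [primaryFactor]

lemma primaryFactor_eq_zero_iff {u : ℂ} : primaryFactor u = 0 ↔ u = 1 := by
  rw [primaryFactor, mul_eq_zero, or_iff_left (exp_ne_zero _), sub_eq_zero, eq_comm]

lemma hasDerivAt_primaryFactor (u : ℂ) :
    HasDerivAt primaryFactor (-u ^ 2 * exp (u + u ^ 2 / 2)) u := by
  have hexponent : HasDerivAt (fun u : ℂ => u + u ^ 2 / 2) (1 + u) u :=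
    ((hasDerivAt_id u).add ((hasDerivAt_pow 2 u).div_const 2)).congr_deriv (by simp)
  exact (((hasDerivAt_id u).const_sub 1).mul hexponent.cexp).congr_deriv (by simp only [id]; ring)

lemma differentiable_primaryFactor : Differentiable ℂ primaryFactor :=
  fun u => (hasDerivAt_primaryFactor u).differentiableAt

lemma norm_primaryFactor_sub_one_le {u : ℂ} (hu : ‖u‖ ≤ 1) :
    ‖primaryFactor u - 1‖ ≤ Real.exp (3 / 2) * ‖u‖ ^ 3 := by
  have hderiv : ∀ v ∈ Metric.closedBall (0 : ℂ) ‖u‖,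
      ‖-v ^ 2 * exp (v + v ^ 2 / 2)‖ ≤ ‖u‖ ^ 2 * Real.exp (3 / 2) := by
    intro v hv
    rw [mem_closedBall_zero_iff] at hv
    have hexponent : ‖v + v ^ 2 / 2‖ ≤ 3 / 2 := by
      calc ‖v + v ^ 2 / 2‖ ≤ ‖v‖ + ‖v‖ ^ 2 / 2 := norm_add_le_of_le le_rfl (by simp)
        _ ≤ 3 / 2 := by nlinarith [norm_nonneg v]
    rw [norm_mul, norm_neg, norm_pow]
    gcongr
    exact (norm_exp_le_exp_norm _).trans (Real.exp_le_exp.2 hexponent)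
  have hmean := (convex_closedBall (0 : ℂ) ‖u‖).norm_image_sub_le_of_norm_hasDerivWithin_le
    (fun v _ => (hasDerivAt_primaryFactor v).hasDerivWithinAt) hderiv
    (x := 0) (y := u) (by simp) (by simp)
  calc ‖primaryFactor u - 1‖ ≤ ‖u‖ ^ 2 * Real.exp (3 / 2) * ‖u‖ := by simpa using hmean
    _ = Real.exp (3 / 2) * ‖u‖ ^ 3 := by ring

lemma logDeriv_primaryFactor_div {z l : ℂ} (hzl : z ≠ l) :
    logDeriv (fun z => primaryFactor (z / l)) z = z ^ 2 / (l ^ 2 * (z - l)) := by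
  rcases eq_or_ne l 0 with rfl | hl
  · simp
  have hderiv := ((hasDerivAt_primaryFactor (z / l)).comp z ((hasDerivAt_id z).div_const l)).deriv
  have hsub : z - l ≠ 0 := sub_ne_zero.2 hzl
  have hsub' : l - z ≠ 0 := sub_ne_zero.2 hzl.symm
  have hexp := exp_ne_zero (z / l + (z / l) ^ 2 / 2)
  simp only [Function.comp_def, id] at hderiv
  rw [logDeriv_apply, hderiv, primaryFactor]
  generalize exp (z / l + (z / l) ^ 2 / 2) = e at hexp ⊢
  field_simp
  ring

end PrimaryFactor

section SigmaProduct

open Complex Filter Topology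

variable (L : PeriodPair)

/-- The function `σ(z) / z`, extended over the origin, where it has no zero. The factor at `l = 0`
is `1`, because `z / 0 = 0`. -/
noncomputable def sigmaProduct (z : ℂ) : ℂ := ∏' l : L.lattice, primaryFactor (z / l)

lemma wSigma_eq_mul_sigmaProduct (z : ℂ) : wSigma L.ω₁ L.ω₂ z = z * sigmaProduct L z := by
  have hsupport : (fun p : ℤ × ℤ => primaryFactor (z / (L.latticeEquivProd.symm p : ℂ))).mulSupport
      ⊆ {p | p ≠ 0} := by
    rintro p hp rfl
    simp at hp
  rw [wSigma, sigmaProduct, ← L.latticeEquivProd.symm.toEquiv.tprod_eq]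
  congr 1
  refine .trans (tprod_congr fun p => ?_) (tprod_subtype_eq_of_mulSupport_subset hsupport)
  have hp : (L.latticeEquivProd.symm.toEquiv p.1 : ℂ) = p.1.1 * L.ω₁ + p.1.2 * L.ω₂ :=
    L.latticeEquiv_symm_apply p.1
  simp only [hp, primaryFactor, div_pow, div_div, mul_comm (2 : ℂ)]

lemma finite_setOf_norm_lattice_le (R : ℝ) : {l : L.lattice | ‖(l : ℂ)‖ ≤ R}.Finite := by
  refine (isCompact_iff_finite.mp (isCompact_closedBall (0 : L.lattice) R)).subset fun l hl => ?_
  simpa using hl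

lemma eventually_lt_norm_lattice (R : ℝ) : ∀ᶠ l : L.lattice in cofinite, R < ‖(l : ℂ)‖ := by
  simpa [Filter.eventually_cofinite] using finite_setOf_norm_lattice_le L R

lemma summable_inv_norm_pow_three : Summable fun l : L.lattice => ‖(l : ℂ)‖⁻¹ ^ 3 := by
  have hrank : (-3 : ℝ) < -Module.finrank ℤ L.lattice := by norm_num [finrank_real_complex]
  refine (ZLattice.summable_norm_rpow L.lattice (-3) hrank).congr fun l => ?_
  rw [Real.rpow_neg (norm_nonneg _), inv_pow]
  norm_cast

lemma eventually_norm_primaryFactor_sub_one_le (r : ℝ) :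
    ∀ᶠ l : L.lattice in cofinite, ∀ z ∈ Metric.ball (0 : ℂ) r,
      ‖primaryFactor (z / l) - 1‖ ≤ Real.exp (3 / 2) * r ^ 3 * ‖(l : ℂ)‖⁻¹ ^ 3 := by
  filter_upwards [eventually_lt_norm_lattice L r] with l hl z hz
  rw [mem_ball_zero_iff] at hz
  have hquot : ‖z / l‖ ≤ 1 := by
    rw [norm_div]
    exact div_le_one_of_le₀ (hz.trans hl).le (norm_nonneg _)
  refine (norm_primaryFactor_sub_one_le hquot).trans ?_
  rw [norm_div, div_eq_mul_inv ‖z‖, mul_pow, ← mul_assoc]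
  gcongr

lemma differentiable_primaryFactor_div (l : ℂ) :
    Differentiable ℂ fun z => primaryFactor (z / l) :=
  differentiable_primaryFactor.comp (differentiable_id.div_const l)

lemma multipliableLocallyUniformlyOn_primaryFactor (r : ℝ) :
    MultipliableLocallyUniformlyOn (fun (l : L.lattice) z => primaryFactor (z / l))
      (Metric.ball (0 : ℂ) r) := by
  simpa using Summable.multipliableLocallyUniformlyOn_one_add Metric.isOpen_ball
    ((summable_inv_norm_pow_three L).mul_left (Real.exp (3 / 2) * r ^ 3))
    (eventually_norm_primaryFactor_sub_one_le L r)
    fun l => ((differentiable_primaryFactor_div l).continuous.sub continuous_const).continuousOn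

lemma differentiable_sigmaProduct : Differentiable ℂ (sigmaProduct L) := by
  intro z
  have hball : DifferentiableOn ℂ (sigmaProduct L) (Metric.ball 0 (‖z‖ + 1)) :=
    (hasProdLocallyUniformlyOn_iff_tendstoLocallyUniformlyOn.1
      (multipliableLocallyUniformlyOn_primaryFactor L _).hasProdLocallyUniformlyOn).differentiableOn
      (Eventually.of_forall fun s => (Differentiable.fun_finsetProd
        fun (l : L.lattice) _ => differentiable_primaryFactor_div l).differentiableOn)
      Metric.isOpen_ball
  exact hball.differentiableAt (Metric.isOpen_ball.mem_nhds (by simp))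

variable {L} in
lemma primaryFactor_div_ne_zero {z : ℂ} (hz : z ∈ L.lattice → z = 0) (l : L.lattice) :
    primaryFactor (z / l) ≠ 0 := by
  rw [Ne, primaryFactor_eq_zero_iff]
  intro hquot
  obtain rfl : z = l := (div_eq_one_iff_eq (by rintro hl; simp [hl] at hquot)).1 hquot
  simp [hz l.2] at hquot

variable {L} in
lemma sigmaProduct_ne_zero {z : ℂ} (hz : z ∈ L.lattice → z = 0) : sigmaProduct L z ≠ 0 := by
  have hsummable : Summable fun l : L.lattice => ‖primaryFactor (z / l) - 1‖ := by
    refine .of_norm_bounded_eventually ((summable_inv_norm_pow_three L).mul_left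
      (Real.exp (3 / 2) * (‖z‖ + 1) ^ 3)) ?_
    filter_upwards [eventually_norm_primaryFactor_sub_one_le L (‖z‖ + 1)] with l hl
    simpa using hl z (by simp)
  simpa [sigmaProduct] using tprod_one_add_ne_zero_of_summable
    (f := fun l : L.lattice => primaryFactor (z / l) - 1)
    (fun l => by simpa using primaryFactor_div_ne_zero hz l) hsummable

lemma sigmaProduct_neg (z : ℂ) : sigmaProduct L (-z) = sigmaProduct L z := by
  rw [sigmaProduct, ← (Equiv.neg L.lattice).tprod_eq]
  simp [sigmaProduct]

lemma wSigma_neg (z : ℂ) : wSigma L.ω₁ L.ω₂ (-z) = -wSigma L.ω₁ L.ω₂ z := by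
  simp [wSigma_eq_mul_sigmaProduct, sigmaProduct_neg]

lemma differentiable_wSigma : Differentiable ℂ (wSigma L.ω₁ L.ω₂) := by
  rw [funext (wSigma_eq_mul_sigmaProduct L)]
  exact differentiable_id.mul (differentiable_sigmaProduct L)

variable {L} in
lemma ne_zero_of_notMem_lattice {z : ℂ} (hz : z ∉ L.lattice) : z ≠ 0 :=
  fun h => hz (h ▸ zero_mem _)

variable {L} in
lemma wSigma_ne_zero {z : ℂ} (hz : z ∉ L.lattice) : wSigma L.ω₁ L.ω₂ z ≠ 0 := by
  rw [wSigma_eq_mul_sigmaProduct]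
  exact mul_ne_zero (ne_zero_of_notMem_lattice hz) (sigmaProduct_ne_zero fun h => absurd h hz)

end SigmaProduct

/-! ### The zeta function and quasi-periodicity -/

section QuasiPeriodicity

open Complex Filter

variable {L : PeriodPair}

variable (L) in
lemma summable_sq_div_sq_mul_sub (z : ℂ) :
    Summable fun l : L.lattice => z ^ 2 / ((l : ℂ) ^ 2 * (z - l)) := by
  refine .of_norm_bounded_eventually ((summable_inv_norm_pow_three L).mul_left (2 * ‖z‖ ^ 2)) ?_
  filter_upwards [eventually_lt_norm_lattice L (2 * ‖z‖)] with l hl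
  have hpos : 0 < ‖(l : ℂ)‖ := by linarith [norm_nonneg z]
  have hsub : ‖(l : ℂ)‖ / 2 ≤ ‖z - l‖ := by
    rw [norm_sub_rev]
    linarith [norm_sub_norm_le (l : ℂ) z]
  rw [norm_div, norm_mul, norm_pow, norm_pow]
  calc ‖z‖ ^ 2 / (‖(l : ℂ)‖ ^ 2 * ‖z - l‖)
      ≤ ‖z‖ ^ 2 / (‖(l : ℂ)‖ ^ 2 * (‖(l : ℂ)‖ / 2)) := by gcongr
    _ = 2 * ‖z‖ ^ 2 * ‖(l : ℂ)‖⁻¹ ^ 3 := by field_simp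

lemma wZeta_eq_one_div_add_logDeriv {z : ℂ} (hz : z ∉ L.lattice) :
    wZeta L.ω₁ L.ω₂ z = 1 / z + logDeriv (sigmaProduct L) z := by
  rw [wZeta, ← logDeriv_apply, funext (wSigma_eq_mul_sigmaProduct L),
    logDeriv_mul (f := fun z => z) _ (ne_zero_of_notMem_lattice hz)
      (sigmaProduct_ne_zero fun h => absurd h hz) differentiableAt_id
      (differentiable_sigmaProduct L z), logDeriv_id' z]

lemma hasSum_wZeta {z : ℂ} (hz : z ∉ L.lattice) :
    HasSum (fun l : L.lattice => 1 / (z - l) + 1 / l + z / (l : ℂ) ^ 2) (wZeta L.ω₁ L.ω₂ z) := by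
  have hterm (l : L.lattice) :
      logDeriv (fun z => primaryFactor (z / l)) z = z ^ 2 / ((l : ℂ) ^ 2 * (z - l)) :=
    logDeriv_primaryFactor_div fun h => hz (h ▸ l.2)
  have hproduct :
      logDeriv (sigmaProduct L) z = ∑' l : L.lattice, z ^ 2 / ((l : ℂ) ^ 2 * (z - l)) := by
    simp_rw [← hterm]
    exact logDeriv_tprod_eq_tsum Metric.isOpen_ball (by simp)
      (primaryFactor_div_ne_zero fun h => absurd h hz)
      (fun l => (differentiable_primaryFactor_div (l : ℂ)).differentiableOn)
      (by simpa only [hterm] using summable_sq_div_sq_mul_sub L z)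
      (multipliableLocallyUniformlyOn_primaryFactor L (‖z‖ + 1))
      (sigmaProduct_ne_zero fun h => absurd h hz)
  rw [wZeta_eq_one_div_add_logDeriv hz, hproduct]
  refine ((hasSum_ite_eq (0 : L.lattice) (1 / z)).add
    (summable_sq_div_sq_mul_sub L z).hasSum).congr_fun fun l => ?_
  split_ifs with hl
  · simp [hl]
  · have hl' : (l : ℂ) ≠ 0 := by simpa using hl
    have hzl : z - l ≠ 0 := sub_ne_zero.2 fun h => hz (h ▸ l.2)
    field_simp
    ring

lemma neg_notMem_lattice {z : ℂ} (hz : z ∉ L.lattice) : -z ∉ L.lattice := by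
  simpa using hz

lemma wZeta_neg {z : ℂ} (hz : z ∉ L.lattice) :
    wZeta L.ω₁ L.ω₂ (-z) = -wZeta L.ω₁ L.ω₂ z := by
  refine (hasSum_wZeta (neg_notMem_lattice hz)).unique
    (((Equiv.neg L.lattice).hasSum_iff.2 (hasSum_wZeta hz).neg).congr_fun fun l => ?_)
  simp only [Function.comp_apply, Equiv.neg_apply, NegMemClass.coe_neg, neg_sq,
    show -z - (l : ℂ) = -(z - -l) by ring, div_neg]
  ring

/-- The limit does not depend on `z`: the difference of the series for `ζ (z + w)` and `ζ z`, the
latter reindexed by `l ↦ l - w`, becomes independent of `z` once the null series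
`z * ℘ w = z * ∑ (1 / (w - l) ^ 2 - 1 / l ^ 2)` is added. -/
lemma hasSum_wZeta_add_sub {w z : ℂ} (hw : w ∈ L.lattice) (hz : z ∉ L.lattice) :
    HasSum (fun l : L.lattice => 1 / (l : ℂ) - 1 / (l - w) + w / (l : ℂ) ^ 2)
      (wZeta L.ω₁ L.ω₂ (z + w) - wZeta L.ω₁ L.ω₂ z) := by
  lift w to L.lattice using hw
  have hzw : z + w ∉ L.lattice := by rwa [Submodule.add_mem_iff_left _ w.2]
  have hP := L.hasSum_weierstrassP w
  rw [L.weierstrassP_coe] at hP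
  have hdiff := ((hasSum_wZeta hzw).sub ((Equiv.subRight w).hasSum_iff.2 (hasSum_wZeta hz))).add
    (hP.mul_left z)
  rw [mul_zero, add_zero] at hdiff
  refine hdiff.congr_fun fun l => ?_
  simp only [Function.comp_apply, Equiv.subRight_apply, AddSubgroupClass.coe_sub,
    show z - ((l : ℂ) - w) = z + w - l by ring, show ((w : ℂ) - l) ^ 2 = (l - w) ^ 2 by ring]
  ring

lemma wZeta_add {w z : ℂ} (hw : w ∈ L.lattice) (hw2 : w / 2 ∉ L.lattice) (hz : z ∉ L.lattice) :
    wZeta L.ω₁ L.ω₂ (z + w) = wZeta L.ω₁ L.ω₂ z + 2 * wZeta L.ω₁ L.ω₂ (w / 2) := by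
  have hhalf := (hasSum_wZeta_add_sub hw hz).unique
    (hasSum_wZeta_add_sub hw (neg_notMem_lattice hw2))
  rw [show -(w / 2) + w = w / 2 by ring, wZeta_neg hw2] at hhalf
  linear_combination hhalf

lemma hasDerivAt_wSigma {z : ℂ} (hz : z ∉ L.lattice) :
    HasDerivAt (wSigma L.ω₁ L.ω₂) (wZeta L.ω₁ L.ω₂ z * wSigma L.ω₁ L.ω₂ z) z := by
  rw [wZeta, div_mul_cancel₀ _ (wSigma_ne_zero hz)]
  exact (differentiable_wSigma L z).hasDerivAt

lemma countable_lattice (L : PeriodPair) : Countable L.lattice :=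
  L.latticeEquivProd.toEquiv.countable_iff.2 inferInstance

lemma isPreconnected_compl_lattice : IsPreconnected (L.lattice : Set ℂ)ᶜ :=
  (Set.Countable.isConnected_compl_of_one_lt_rank (by simp) (countable_lattice L).to_set).2

lemma wSigma_add_mul_exp_div_eq {w z z' : ℂ} (hw : w ∈ L.lattice) (hw2 : w / 2 ∉ L.lattice)
    (hz : z ∉ L.lattice) (hz' : z' ∉ L.lattice) :
    wSigma L.ω₁ L.ω₂ (z + w) * exp (-(2 * wZeta L.ω₁ L.ω₂ (w / 2) * z)) / wSigma L.ω₁ L.ω₂ z =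
      wSigma L.ω₁ L.ω₂ (z' + w) * exp (-(2 * wZeta L.ω₁ L.ω₂ (w / 2) * z')) /
        wSigma L.ω₁ L.ω₂ z' := by
  set η := 2 * wZeta L.ω₁ L.ω₂ (w / 2)
  let ratio (z : ℂ) : ℂ := wSigma L.ω₁ L.ω₂ (z + w) * exp (-(η * z)) / wSigma L.ω₁ L.ω₂ z
  have hderiv : ∀ z ∈ (L.lattice : Set ℂ)ᶜ, HasDerivAt ratio 0 z := by
    intro z hz
    have hzw : z + w ∉ L.lattice := by rwa [Submodule.add_mem_iff_left _ hw]
    have hexp : HasDerivAt (fun z => exp (-(η * z))) (exp (-(η * z)) * (-(η * 1))) z :=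
      ((hasDerivAt_id z).const_mul η).neg.cexp
    refine ((((hasDerivAt_wSigma hzw).comp_add_const z w).mul hexp).div
      (hasDerivAt_wSigma hz) (wSigma_ne_zero hz)).congr_deriv ?_
    rw [wZeta_add hw hw2 hz, div_eq_zero_iff]
    left
    simp only [Pi.mul_apply]
    ring
  exact L.isClosed_lattice.isOpen_compl.is_const_of_deriv_eq_zero isPreconnected_compl_lattice
    (fun z hz => (hderiv z hz).differentiableAt.differentiableWithinAt)
    (fun z hz => (hderiv z hz).deriv) hz hz'

lemma wSigma_add {w z : ℂ} (hw : w ∈ L.lattice) (hw2 : w / 2 ∉ L.lattice) (hz : z ∉ L.lattice) :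
    wSigma L.ω₁ L.ω₂ (z + w) =
      -exp (2 * wZeta L.ω₁ L.ω₂ (w / 2) * (z + w / 2)) * wSigma L.ω₁ L.ω₂ z := by
  have hhalf := wSigma_add_mul_exp_div_eq hw hw2 hz (neg_notMem_lattice hw2)
  have hne := wSigma_ne_zero hw2
  rw [show -(w / 2) + w = w / 2 by ring, wSigma_neg, div_eq_iff (wSigma_ne_zero hz),
    div_neg, mul_div_right_comm, div_self hne, one_mul, exp_neg, ← div_eq_mul_inv,
    div_eq_iff (exp_ne_zero _)] at hhalf
  rw [hhalf, mul_add, exp_add]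
  ring_nf

end QuasiPeriodicity

/-! ### Legendre's relation -/

section PeriodCell

variable (L : PeriodPair)

/-- The open parallelogram with centre `0` and sides parallel to the periods, twice as large as a
fundamental parallelogram. Its only lattice point is `0`, so `ζ(z) - 1 / z` has a
primitive on it. -/
def periodCell : Set ℂ := L.basis.equivFun ⁻¹' Metric.ball 0 1

lemma basis_equivFun_mul_add_mul (a b : ℝ) :
    L.basis.equivFun (a * L.ω₁ + b * L.ω₂) = ![a, b] := by
  rw [← LinearEquiv.eq_symm_apply, Module.Basis.equivFun_symm_apply]
  simp

lemma isOpen_periodCell : IsOpen (periodCell L) :=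
  Metric.isOpen_ball.preimage (L.basis.equivFun.toLinearMap.continuous_of_finiteDimensional)

lemma convex_periodCell : Convex ℝ (periodCell L) :=
  (convex_ball 0 1).linear_preimage L.basis.equivFun.toLinearMap

lemma zero_mem_periodCell : 0 ∈ periodCell L := by
  simp [periodCell]

variable {L}

lemma neg_mem_periodCell {z : ℂ} (hz : z ∈ periodCell L) : -z ∈ periodCell L := by
  simpa [periodCell] using hz

lemma mul_add_mul_mem_periodCell_iff {a b : ℝ} :
    a * L.ω₁ + b * L.ω₂ ∈ periodCell L ↔ |a| < 1 ∧ |b| < 1 := by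
  rw [periodCell, Set.mem_preimage, basis_equivFun_mul_add_mul]
  simp [pi_norm_lt_iff]

lemma half_add_mul_mem_periodCell {t : ℝ} (ht : |t| ≤ 1 / 2) :
    L.ω₁ / 2 + t * L.ω₂ ∈ periodCell L ∧ L.ω₂ / 2 + t * L.ω₁ ∈ periodCell L := by
  have hhalf : |(1 / 2 : ℝ)| < 1 := by norm_num [abs_of_pos]
  have ht1 : |t| < 1 := by linarith
  constructor
  · convert mul_add_mul_mem_periodCell_iff (L := L).2 ⟨hhalf, ht1⟩ using 1
    push_cast
    ring
  · convert mul_add_mul_mem_periodCell_iff (L := L).2 ⟨ht1, hhalf⟩ using 1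
    push_cast
    ring

lemma eq_zero_of_mem_lattice_of_mem_periodCell {z : ℂ} (hz : z ∈ periodCell L)
    (hlattice : z ∈ L.lattice) : z = 0 := by
  obtain ⟨m, n, rfl⟩ := PeriodPair.mem_lattice.1 hlattice
  have hcoord := mul_add_mul_mem_periodCell_iff (L := L) (a := m) (b := n)
  push_cast at hcoord
  obtain ⟨hm, hn⟩ := hcoord.1 hz
  have hm : m = 0 := Int.abs_lt_one_iff.1 (by exact_mod_cast hm)
  have hn : n = 0 := Int.abs_lt_one_iff.1 (by exact_mod_cast hn)
  simp [hm, hn]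

lemma sigmaProduct_ne_zero_of_mem_periodCell {z : ℂ} (hz : z ∈ periodCell L) :
    sigmaProduct L z ≠ 0 :=
  sigmaProduct_ne_zero (eq_zero_of_mem_lattice_of_mem_periodCell hz)

end PeriodCell

section Legendre

open Complex

variable {L : PeriodPair}

lemma logDeriv_sigmaProduct_neg (z : ℂ) :
    logDeriv (sigmaProduct L) (-z) = -logDeriv (sigmaProduct L) z := by
  have hderiv := deriv_comp_neg (sigmaProduct L) z
  simp only [sigmaProduct_neg] at hderiv
  rw [logDeriv_apply, logDeriv_apply, sigmaProduct_neg, hderiv, neg_div, neg_neg]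

variable (L) in
lemma exists_even_primitive_logDeriv_sigmaProduct :
    ∃ H : ℂ → ℂ, (∀ z ∈ periodCell L, HasDerivAt H (logDeriv (sigmaProduct L) z) z) ∧
      ∀ z ∈ periodCell L, H (-z) = H z := by
  have hdiff : DifferentiableOn ℂ (logDeriv (sigmaProduct L)) (periodCell L) := fun z hz =>
    ((differentiable_sigmaProduct L).deriv z |>.div (differentiable_sigmaProduct L z)
      (sigmaProduct_ne_zero_of_mem_periodCell hz)).differentiableWithinAt
  obtain ⟨H, hH⟩ := (convex_periodCell L).exists_forall_hasDerivWithinAt hdiff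
  replace hH : ∀ z ∈ periodCell L, HasDerivAt H (logDeriv (sigmaProduct L) z) z :=
    fun z hz => (hH z hz).hasDerivAt ((isOpen_periodCell L).mem_nhds hz)
  have hodd : ∀ z ∈ periodCell L, HasDerivAt (fun z => H (-z) - H z) 0 z := by
    intro z hz
    refine (((hH _ (neg_mem_periodCell hz)).scomp z (hasDerivAt_neg z)).sub
      (hH z hz)).congr_deriv ?_
    simp [logDeriv_sigmaProduct_neg]
  refine ⟨H, hH, fun z hz => ?_⟩
  have hconst := (isOpen_periodCell L).is_const_of_deriv_eq_zero
    (convex_periodCell L).isPreconnected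
    (fun z hz => (hodd z hz).differentiableAt.differentiableWithinAt)
    (fun z hz => (hodd z hz).deriv) hz (zero_mem_periodCell L)
  simpa [sub_eq_zero] using hconst

lemma wZeta_half_add_add_wZeta_half_sub {w u : ℂ} (hw : w ∈ L.lattice) (hw2 : w / 2 ∉ L.lattice)
    (hu : w / 2 - u ∉ L.lattice) :
    wZeta L.ω₁ L.ω₂ (w / 2 + u) + wZeta L.ω₁ L.ω₂ (w / 2 - u) = 2 * wZeta L.ω₁ L.ω₂ (w / 2) := by
  rw [show w / 2 + u = -(w / 2 - u) + w by ring, wZeta_add hw hw2 (neg_notMem_lattice hu),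
    wZeta_neg hu]
  ring

lemma primitive_wZeta_sub_eq {w e : ℂ} {F : ℂ → ℂ} (hw : w ∈ L.lattice) (hw2 : w / 2 ∉ L.lattice)
    (hF : ∀ t : ℝ, |t| ≤ 1 / 2 → w / 2 + t * e ∉ L.lattice ∧
      HasDerivAt F (wZeta L.ω₁ L.ω₂ (w / 2 + t * e)) (w / 2 + t * e)) :
    F ((w + e) / 2) - F ((w - e) / 2) = e * wZeta L.ω₁ L.ω₂ (w / 2) := by
  let φ (t : ℝ) : ℂ := F (w / 2 + t * e) - F (w / 2 + (-t : ℝ) * e) -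
    t * (2 * e * wZeta L.ω₁ L.ω₂ (w / 2))
  have hφ : ∀ t : ℝ, |t| ≤ 1 / 2 → HasDerivAt φ 0 t := by
    intro t ht
    have hline : HasDerivAt (fun t : ℝ => w / 2 + t * e) e t := by
      simpa using (ofRealCLM.hasDerivAt.mul_const e).const_add (w / 2)
    have hline' : HasDerivAt (fun t : ℝ => w / 2 + (-t : ℝ) * e) (-e) t := by
      simpa using ((ofRealCLM.hasDerivAt (x := t)).neg.mul_const e).const_add (w / 2)
    have hlin : HasDerivAt (fun t : ℝ => t * (2 * e * wZeta L.ω₁ L.ω₂ (w / 2)))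
        (2 * e * wZeta L.ω₁ L.ω₂ (w / 2)) t := by
      simpa using ofRealCLM.hasDerivAt.mul_const (2 * e * wZeta L.ω₁ L.ω₂ (w / 2))
    refine ((((hF t ht).2.comp t hline).sub ((hF (-t) (by rwa [abs_neg])).2.comp t hline')).sub
      hlin).congr_deriv ?_
    have hsum := wZeta_half_add_add_wZeta_half_sub (u := t * e) hw hw2
      (by simpa [sub_eq_add_neg] using (hF (-t) (by rwa [abs_neg])).1)
    rw [ofReal_neg, neg_mul, ← sub_eq_add_neg]
    linear_combination e * hsum
  have habs : ∀ t ∈ Set.Icc (0 : ℝ) (1 / 2), |t| ≤ 1 / 2 := fun t ht => by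
    rw [abs_of_nonneg ht.1]
    exact ht.2
  have hconst := constant_of_has_deriv_right_zero
    (fun t ht => (hφ t (habs t ht)).continuousAt.continuousWithinAt)
    (fun t ht => (hφ t (habs t (Set.Ico_subset_Icc_self ht))).hasDerivWithinAt)
    (1 / 2) (by norm_num)
  simp only [φ] at hconst
  push_cast at hconst
  ring_nf at hconst ⊢
  linear_combination hconst

variable (L) in
lemma exists_primitive_wZeta (p : ℂ) :
    ∃ F : ℂ → ℂ, (∀ z ∈ periodCell L, z / p ∈ slitPlane →
        z ∉ L.lattice ∧ HasDerivAt F (wZeta L.ω₁ L.ω₂ z) z) ∧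
      ∀ z ∈ periodCell L, F z - F (-z) = log (z / p) - log (-z / p) := by
  obtain ⟨H, hH, heven⟩ := exists_even_primitive_logDeriv_sigmaProduct L
  refine ⟨fun z => log (z / p) + H z, fun z hz hslit => ?_, fun z hz => by simp [heven z hz]⟩
  have hz0 : z ≠ 0 := by
    rintro rfl
    simp at hslit
  have hp0 : p ≠ 0 := by
    rintro rfl
    simp at hslit
  have hlattice : z ∉ L.lattice := fun h => hz0 (eq_zero_of_mem_lattice_of_mem_periodCell hz h)
  refine ⟨hlattice, ?_⟩
  rw [wZeta_eq_one_div_add_logDeriv hlattice]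
  refine ((((hasDerivAt_id z).div_const p).clog hslit).add (hH z hz)).congr_deriv ?_
  simp only [id]
  field_simp

lemma half_add_mul_div_mem_slitPlane {w e : ℂ} (he : (e / ((w + e) / 2)).im ≠ 0) (t : ℝ) :
    (w / 2 + t * e) / ((w + e) / 2) ∈ slitPlane := by
  set p := (w + e) / 2 with hp
  have hp0 : p ≠ 0 := by
    intro h
    simp [h] at he
  have hpoint : (w / 2 + t * e) / p = 1 - (1 / 2 - t : ℝ) * (e / p) := by
    rw [← mul_div_assoc, eq_sub_iff_add_eq, ← add_div, div_eq_one_iff_eq hp0, hp]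
    push_cast
    ring
  rw [hpoint]
  rcases eq_or_ne (1 / 2 - t) 0 with ht | ht
  · rw [ht]
    simp
  · refine .inr ?_
    rw [sub_im, im_ofReal_mul, one_im, zero_sub]
    exact neg_ne_zero.2 (mul_ne_zero ht he)

lemma log_neg_of_im_pos {z : ℂ} (hz : 0 < z.im) : log (-z) = log z - Real.pi * I := by
  apply Complex.ext
  · simp [log_re]
  · simp [log_im, arg_neg_eq_arg_sub_pi_of_im_pos hz]

lemma im_div_half_add_neg {ω₁ ω₂ : ℂ} (hτ : 0 < (ω₂ / ω₁).im) :
    (ω₁ / ((ω₁ + ω₂) / 2)).im < 0 := by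
  have hω₁ : ω₁ ≠ 0 := by
    rintro rfl
    simp at hτ
  have hsum : ω₁ / ((ω₁ + ω₂) / 2) = 2 * (1 + ω₂ / ω₁)⁻¹ := by
    rw [← div_self hω₁, ← add_div, inv_div, div_div_eq_mul_div]
    ring
  have hpos : 0 < normSq (1 + ω₂ / ω₁) := normSq_pos.2 fun h =>
    hτ.ne' (by simpa using congrArg im h)
  rw [hsum, ← ofReal_ofNat, im_ofReal_mul, inv_im, add_im, one_im, zero_add]
  exact mul_neg_of_pos_of_neg two_pos (div_neg_of_neg_of_pos (neg_neg_of_pos hτ) hpos)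

theorem legendre_relation (hτ : 0 < (L.ω₂ / L.ω₁).im) :
    L.ω₂ * wZeta L.ω₁ L.ω₂ (L.ω₁ / 2) - L.ω₁ * wZeta L.ω₁ L.ω₂ (L.ω₂ / 2) = Real.pi * I := by
  set p := (L.ω₁ + L.ω₂) / 2 with hp
  set q := (L.ω₂ - L.ω₁) / 2 with hq
  have him₁ : (L.ω₁ / p).im < 0 := im_div_half_add_neg hτ
  have hp0 : p ≠ 0 := by
    intro h
    simp [h] at him₁
  have hω₂p : L.ω₂ / p = 2 - L.ω₁ / p := by
    rw [eq_sub_iff_add_eq, ← add_div, div_eq_iff hp0, hp]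
    ring
  have hqp : q / p = 1 - L.ω₁ / p := by
    rw [eq_sub_iff_add_eq, ← add_div, div_eq_one_iff_eq hp0, hp, hq]
    ring
  have him₂ : 0 < (L.ω₂ / p).im := by simpa [hω₂p] using him₁
  have hqcell : q ∈ periodCell L := by
    have hhalf : |(-(1 / 2) : ℝ)| ≤ 1 / 2 := by rw [abs_neg, abs_of_pos one_half_pos]
    convert (half_add_mul_mem_periodCell (L := L) hhalf).2 using 1
    push_cast
    ring
  -- `ζ` is odd, but the branch of its primitive `F` is not even: the jump of `log (z / p)` between
  -- `-q` and `q` is the right-hand side.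
  obtain ⟨F, hF, hjump⟩ := exists_primitive_wZeta L p
  have hside₁ : F p - F (-q) = L.ω₂ * wZeta L.ω₁ L.ω₂ (L.ω₁ / 2) := by
    convert primitive_wZeta_sub_eq L.ω₁_mem_lattice L.ω₁_div_two_notMem_lattice fun t ht =>
      hF _ (half_add_mul_mem_periodCell ht).1 (half_add_mul_div_mem_slitPlane him₂.ne' t) using 3
    ring
  rw [add_comm] at hp
  have hside₂ : F p - F q = L.ω₁ * wZeta L.ω₁ L.ω₂ (L.ω₂ / 2) := by
    rw [hp]
    exact primitive_wZeta_sub_eq L.ω₂_mem_lattice L.ω₂_div_two_notMem_lattice fun t ht =>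
      hF _ (half_add_mul_mem_periodCell ht).2
        (hp ▸ half_add_mul_div_mem_slitPlane (hp ▸ him₁.ne) t)
  have hlog := log_neg_of_im_pos (z := q / p) (by simpa [hqp] using him₁)
  rw [← neg_div] at hlog
  linear_combination hside₂ - hside₁ + hjump q hqcell - hlog

end Legendre

/-! ### Periodicity of the Green function -/

section Periodicity

open Complex ComplexConjugate

lemma Utorus_eq_Utorus_sub (ω₁ ω₂ z w : ℂ) : Utorus ω₁ ω₂ z w = Utorus ω₁ ω₂ (z - w) 0 := by
  simp only [Utorus, sub_zero]

variable {L : PeriodPair}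

lemma sigmaStar_ne_zero {z : ℂ} (hz : z ∉ L.lattice) : sigmaStar L.ω₁ L.ω₂ z ≠ 0 :=
  mul_ne_zero (exp_ne_zero _) (wSigma_ne_zero hz)

lemma sigmaStar_add {w z : ℂ} (hw : w ∈ L.lattice) (hw2 : w / 2 ∉ L.lattice) (hz : z ∉ L.lattice)
    (hb : bconst L.ω₁ L.ω₂ * w + wZeta L.ω₁ L.ω₂ (w / 2) = conj w) :
    sigmaStar L.ω₁ L.ω₂ (z + w) =
      -exp (2 * conj w * (z + w / 2)) * sigmaStar L.ω₁ L.ω₂ z := by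
  rw [sigmaStar, sigmaStar, wSigma_add hw hw2 hz, neg_mul, mul_neg, neg_mul, ← mul_assoc,
    ← mul_assoc, ← exp_add, ← exp_add, ← hb]
  ring_nf

lemma Utorus_add_zero {w z : ℂ} (hw : w ∈ L.lattice) (hw2 : w / 2 ∉ L.lattice) (hz : z ∉ L.lattice)
    (hb : bconst L.ω₁ L.ω₂ * w + wZeta L.ω₁ L.ω₂ (w / 2) = conj w) :
    Utorus L.ω₁ L.ω₂ (z + w) 0 = Utorus L.ω₁ L.ω₂ z 0 := by
  have hexponent : (2 * conj w * (z + w / 2)).re = ‖z + w‖ ^ 2 - ‖z‖ ^ 2 := by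
    rw [← normSq_eq_norm_sq, ← normSq_eq_norm_sq, normSq_apply, normSq_apply]
    simp only [mul_re, mul_im, add_re, add_im, conj_re, conj_im, re_ofNat, im_ofNat, div_ofNat_re,
      div_ofNat_im]
    ring
  simp only [Utorus, sub_zero]
  rw [sigmaStar_add hw hw2 hz hb, norm_mul, norm_neg, norm_exp,
    Real.log_mul (Real.exp_ne_zero _) (norm_ne_zero_iff.2 (sigmaStar_ne_zero hz)), Real.log_exp,
    hexponent]
  ring

lemma bconst_mul_ω₁_add_wZeta (h1 : L.ω₁.im = 0) :
    bconst L.ω₁ L.ω₂ * L.ω₁ + wZeta L.ω₁ L.ω₂ (L.ω₁ / 2) = conj L.ω₁ := by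
  have hω₁ : L.ω₁ ≠ 0 := L.indep.ne_zero 0
  rw [conj_eq_iff_im.2 h1, bconst, lambda1]
  field_simp
  ring

lemma bconst_mul_ω₂_add_wZeta (h1 : L.ω₁.im = 0) (harea : L.ω₁.re * L.ω₂.im = Real.pi / 2) :
    bconst L.ω₁ L.ω₂ * L.ω₂ + wZeta L.ω₁ L.ω₂ (L.ω₂ / 2) = conj L.ω₂ := by
  have hreal : (L.ω₁.re : ℂ) = L.ω₁ := conj_eq_iff_re.1 (conj_eq_iff_im.2 h1)
  have hω₁ : L.ω₁ ≠ 0 := L.indep.ne_zero 0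
  have hre : L.ω₁.re ≠ 0 := fun h => hω₁ (by rw [← hreal, h, ofReal_zero])
  have hτ : 0 < (L.ω₂ / L.ω₁).im := by
    rw [← hreal, div_ofReal_im, ← mul_div_mul_left _ _ hre, harea]
    exact div_pos (by positivity) (mul_self_pos.2 hre)
  have hconj : conj L.ω₂ = L.ω₂ - 2 * L.ω₂.im * I := by
    have hsub := sub_conj L.ω₂
    push_cast at hsub
    linear_combination -hsub
  have harea' : L.ω₁ * L.ω₂.im = Real.pi / 2 := by
    rw [← hreal]
    exact_mod_cast harea
  rw [hconj, bconst, lambda1]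
  field_simp
  linear_combination -legendre_relation hτ + 2 * I * harea'

lemma Utorus_add_zero_of_mem_lattice (h1 : L.ω₁.im = 0)
    (harea : L.ω₁.re * L.ω₂.im = Real.pi / 2) {w : ℂ} (hw : w ∈ L.lattice) :
    ∀ z ∉ L.lattice, Utorus L.ω₁ L.ω₂ (z + w) 0 = Utorus L.ω₁ L.ω₂ z 0 := by
  have hspan : L.lattice.toAddSubgroup = AddSubgroup.closure {L.ω₁, L.ω₂} :=
    Submodule.span_int_eq_addSubgroupClosure _
  have hadd {w z : ℂ} (hw : w ∈ AddSubgroup.closure {L.ω₁, L.ω₂}) (hz : z ∉ L.lattice) :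
      z + w ∉ L.lattice := by
    rw [← hspan] at hw
    rwa [Submodule.add_mem_iff_left _ hw]
  replace hw : w ∈ AddSubgroup.closure {L.ω₁, L.ω₂} := hspan ▸ hw
  induction hw using AddSubgroup.closure_induction with
  | mem w hw =>
    intro z hz
    rcases hw with rfl | rfl
    · exact Utorus_add_zero L.ω₁_mem_lattice L.ω₁_div_two_notMem_lattice hz
        (bconst_mul_ω₁_add_wZeta h1)
    · exact Utorus_add_zero L.ω₂_mem_lattice L.ω₂_div_two_notMem_lattice hz
        (bconst_mul_ω₂_add_wZeta h1 harea)
  | zero => simp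
  | add v w hv _ ihv ihw =>
    intro z hz
    rw [← add_assoc, ihw _ (hadd hv hz), ihv z hz]
  | neg w hw ih =>
    intro z hz
    rw [← ih _ (hadd (neg_mem hw) hz), neg_add_cancel_right]

end Periodicity

/-! ### Integrals of periodic functions -/

section PeriodicIntegrals

open Filter Topology
open scoped Pointwise

lemma exists_vadd_invariant_ae_eq {G α β : Type*} [AddGroup G] [Countable G] [AddAction G α]
    [Zero β] [MeasurableSpace α] {μ : Measure α} {f : α → β}
    (hf : ∀ g : G, ∀ᵐ x ∂μ, f (g +ᵥ x) = f x) :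
    ∃ f' : α → β, f' =ᵐ[μ] f ∧ ∀ (g : G) (x : α), f' (g +ᵥ x) = f' x := by
  classical
  let S : Set α := {x | ∀ g : G, f (g +ᵥ x) = f x}
  have hS (g : G) (x : α) : g +ᵥ x ∈ S ↔ x ∈ S := by
    refine ⟨fun hx h => ?_, fun hx h => ?_⟩
    · rw [← neg_vadd_vadd g x, hx, vadd_vadd, hx]
    · rw [vadd_vadd, hx, hx]
  refine ⟨S.indicator f, ?_, fun g x => ?_⟩
  · filter_upwards [ae_all_iff.2 hf] with x hx using Set.indicator_of_mem (s := S) hx f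
  · by_cases hx : x ∈ S
    · rw [Set.indicator_of_mem ((hS g x).2 hx), Set.indicator_of_mem hx, hx]
    · rw [Set.indicator_of_notMem (mt (hS g x).1 hx), Set.indicator_of_notMem hx]

variable {E F : Type*} [AddCommGroup E] [TopologicalSpace E] [IsTopologicalAddGroup E]
  [MeasurableSpace E] [BorelSpace E] {μ : Measure E} [μ.IsAddLeftInvariant] [NormedAddCommGroup F]

lemma setIntegral_comp_sub_right {G : Type*} [AddGroup G] [Countable G] [AddAction G E]
    [MeasurableConstVAdd G E] [VAddInvariantMeasure G E μ] [VAddCommClass E G E]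
    [NormedSpace ℝ F] {D : Set E} (hD : IsAddFundamentalDomain G D μ) {f : E → F}
    (hf : ∀ g : G, ∀ᵐ x ∂μ, f (g +ᵥ x) = f x) (a : E) :
    ∫ x in D, f (x - a) ∂μ = ∫ x in D, f x ∂μ := by
  obtain ⟨f', hf', hinv⟩ := exists_vadd_invariant_ae_eq hf
  have htranslate := measurePreserving_sub_right μ a
  have hpreimage : (fun x => x - a) ⁻¹' (-a +ᵥ D) = D := by
    ext x
    simp [Set.mem_vadd_set_iff_neg_vadd_mem]
  calc ∫ x in D, f (x - a) ∂μ
      = ∫ x in D, f' (x - a) ∂μ :=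
        integral_congr_ae (ae_restrict_of_ae (htranslate.quasiMeasurePreserving.ae hf'.symm))
    _ = ∫ x in -a +ᵥ D, f' x ∂μ := by
        rw [← htranslate.setIntegral_preimage_emb (Homeomorph.subRight a).measurableEmbedding f'
          (-a +ᵥ D), hpreimage]
    _ = ∫ x in D, f' x ∂μ := (hD.vadd_of_comm (-a)).setIntegral_eq hD hinv
    _ = ∫ x in D, f x ∂μ := integral_congr_ae (ae_restrict_of_ae hf')

lemma integrableAtFilter_nhds_comp_sub_right {f : E → F} {a x : E}
    (hf : IntegrableAtFilter f (𝓝 (x - a)) μ) :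
    IntegrableAtFilter (fun x => f (x - a)) (𝓝 x) μ := by
  have hemb := (Homeomorph.subRight a).measurableEmbedding
  refine (hemb.integrableAtFilter_map_iff (f := f)).1 ?_
  rw [(Homeomorph.subRight a).map_nhds_eq, Homeomorph.coe_subRight,
    (measurePreserving_sub_right μ a).map_eq]
  exact hf

end PeriodicIntegrals

section FundamentalDomain

open Complex

variable (L : PeriodPair)

lemma fundDomain_eq_zspan_fundamentalDomain :
    fundDomain L.ω₁ L.ω₂ = ZSpan.fundamentalDomain L.basis := by
  ext z
  rw [ZSpan.mem_fundamentalDomain, fundDomain]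
  constructor
  · rintro ⟨⟨s, t⟩, ⟨hs, ht⟩, rfl⟩ i
    rw [← Module.Basis.equivFun_apply, basis_equivFun_mul_add_mul]
    fin_cases i
    exacts [hs, ht]
  · intro hz
    refine ⟨(L.basis.repr z 0, L.basis.repr z 1), ⟨hz 0, hz 1⟩, ?_⟩
    simpa [Fin.sum_univ_two] using L.basis.sum_repr z

lemma isAddFundamentalDomain_fundDomain :
    IsAddFundamentalDomain L.lattice (fundDomain L.ω₁ L.ω₂) := by
  rw [fundDomain_eq_zspan_fundamentalDomain, L.lattice_eq_span_range_basis]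
  exact ZSpan.isAddFundamentalDomain L.basis volume

lemma isBounded_fundDomain : Bornology.IsBounded (fundDomain L.ω₁ L.ω₂) := by
  rw [fundDomain_eq_zspan_fundamentalDomain]
  exact ZSpan.fundamentalDomain_isBounded _

lemma volume_fundDomain_ne_top : volume (fundDomain L.ω₁ L.ω₂) ≠ ⊤ :=
  (isBounded_fundDomain L).measure_lt_top.ne

lemma volume_fundDomain_ne_zero : volume (fundDomain L.ω₁ L.ω₂) ≠ 0 := by
  rw [fundDomain_eq_zspan_fundamentalDomain]
  exact ZSpan.measure_fundamentalDomain_ne_zero _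

variable {L}

lemma volume_real_fundDomain (h1 : L.ω₁.im = 0) :
    volume.real (fundDomain L.ω₁ L.ω₂) = |L.ω₁.re * L.ω₂.im| := by
  have hunit : volume.real (parallelepiped orthonormalBasisOneI.toBasis) = 1 := by
    rw [OrthonormalBasis.coe_toBasis, measureReal_def,
      orthonormalBasisOneI.volume_parallelepiped, ENNReal.toReal_one]
  rw [fundDomain_eq_zspan_fundamentalDomain,
    ZSpan.measureReal_fundamentalDomain L.basis volume orthonormalBasisOneI.toBasis,
    measureReal_congr (ZSpan.fundamentalDomain_ae_parallelepiped _ _), hunit]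
  simp [Module.Basis.det_apply, Matrix.det_fin_two, Module.Basis.toMatrix_apply, h1]

lemma two_div_pi_mul_setIntegral_fundDomain (h1 : L.ω₁.im = 0)
    (harea : L.ω₁.re * L.ω₂.im = Real.pi / 2) (f : ℂ → ℝ) :
    2 / Real.pi * ∫ z in fundDomain L.ω₁ L.ω₂, f z = ⨍ z in fundDomain L.ω₁ L.ω₂, f z := by
  rw [setAverage_eq, volume_real_fundDomain h1, harea, abs_of_pos (by positivity), inv_div,
    smul_eq_mul]

end FundamentalDomain

/-! ### Integrability of the Green function -/

section Integrability

open Complex Filter Topology Asymptotics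

lemma measurable_Utorus (L : PeriodPair) (w : ℂ) :
    Measurable fun z => Utorus L.ω₁ L.ω₂ z w := by
  have hσ := (differentiable_wSigma L).continuous.measurable
  unfold Utorus sigmaStar
  fun_prop

variable {L : PeriodPair}

lemma continuousAt_Utorus_zero {z : ℂ} (hz : z ∉ L.lattice) :
    ContinuousAt (fun z => Utorus L.ω₁ L.ω₂ z 0) z := by
  have hσ := (differentiable_wSigma L).continuous
  have hstar : Continuous (sigmaStar L.ω₁ L.ω₂) := by
    unfold sigmaStar
    fun_prop
  simp only [Utorus, sub_zero]
  exact ((hstar.norm.continuousAt.log (norm_ne_zero_iff.2 (sigmaStar_ne_zero hz))).sub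
    (by fun_prop)).sub continuousAt_const

lemma integrableAtFilter_norm_rpow {γ : ℝ} (hγ : -2 < γ) :
    IntegrableAtFilter (fun z : ℂ => ‖z‖ ^ γ) (𝓝 0) := by
  refine locallyIntegrable_of_norm_le_rpow (C := 1) (α := -γ) (by simp) ?_ ?_ ?_ 0
  · simpa using neg_lt.1 hγ
  · refine .of_forall fun z => ?_
    simp [abs_of_nonneg (Real.rpow_nonneg (norm_nonneg z) γ)]
  · exact (by fun_prop : Measurable fun z : ℂ => ‖z‖ ^ γ).aestronglyMeasurable

variable (L) in
lemma exists_Utorus_zero_eq_log_norm_add :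
    ∃ g : ℂ → ℝ, ContinuousAt g 0 ∧
      ∀ᶠ z in 𝓝[≠] 0, Utorus L.ω₁ L.ω₂ z 0 = Real.log ‖z‖ + g z := by
  have hcont : Continuous fun z => exp (bconst L.ω₁ L.ω₂ * z ^ 2) * sigmaProduct L z := by
    have := (differentiable_sigmaProduct L).continuous
    fun_prop
  have hzero : exp (bconst L.ω₁ L.ω₂ * 0 ^ 2) * sigmaProduct L 0 ≠ 0 :=
    mul_ne_zero (exp_ne_zero _) (sigmaProduct_ne_zero fun _ => rfl)
  refine ⟨fun z => Real.log ‖exp (bconst L.ω₁ L.ω₂ * z ^ 2) * sigmaProduct L z‖ - ‖z‖ ^ 2 -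
    Aconst L.ω₁ L.ω₂, ((hcont.norm.continuousAt.log (norm_ne_zero_iff.2 hzero)).sub
      (by fun_prop)).sub continuousAt_const, ?_⟩
  filter_upwards [(hcont.continuousAt.eventually_ne hzero).filter_mono nhdsWithin_le_nhds,
    self_mem_nhdsWithin] with z hz hz0
  rw [Utorus, sub_zero, sigmaStar, wSigma_eq_mul_sigmaProduct, mul_left_comm, norm_mul z,
    Real.log_mul (norm_ne_zero_iff.2 hz0) (norm_ne_zero_iff.2 hz)]
  ring

lemma integrableAtFilter_exp_mul_Utorus_zero {γ : ℝ} (hγ : -2 < γ) :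
    IntegrableAtFilter (fun z => Real.exp (γ * Utorus L.ω₁ L.ω₂ z 0)) (𝓝 0) := by
  obtain ⟨g, hg, hsplit⟩ := exists_Utorus_zero_eq_log_norm_add L
  have hexp : ∀ᶠ z in 𝓝[≠] 0, Real.exp (γ * g z) * ‖z‖ ^ γ =
      Real.exp (γ * Utorus L.ω₁ L.ω₂ z 0) := by
    filter_upwards [hsplit, self_mem_nhdsWithin] with z hz hz0
    rw [hz, Real.rpow_def_of_pos (norm_pos_iff.2 hz0), ← Real.exp_add]
    ring_nf
  have hbounded : (fun z => Real.exp (γ * g z)) =O[𝓝[≠] 0] fun _ => (1 : ℝ) :=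
    ((hg.const_mul γ).rexp.isBigO_one ℝ).mono nhdsWithin_le_nhds
  have hbigO : (fun z => Real.exp (γ * Utorus L.ω₁ L.ω₂ z 0)) =O[𝓝[≠] 0] fun z => ‖z‖ ^ γ := by
    simpa only [one_mul] using
      (hbounded.mul (isBigO_refl (fun z : ℂ => ‖z‖ ^ γ) _)).congr' hexp .rfl
  have hmeas := ((measurable_Utorus L 0).const_mul γ).exp.aestronglyMeasurable (μ := volume)
  have := (measurableSet_singleton (0 : ℂ)).compl.nhdsWithin_isMeasurablyGenerated 0
  have hpunctured := hbigO.integrableAtFilter hmeas.stronglyMeasurableAtFilter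
    ((integrableAtFilter_norm_rpow hγ).filter_mono nhdsWithin_le_nhds)
  exact .of_inf_ae (hpunctured.filter_mono (inf_le_inf_left _ (le_principal_iff.2
    (compl_mem_ae_iff.2 (measure_singleton 0)))))

lemma ae_notMem_lattice (L : PeriodPair) : ∀ᵐ z : ℂ, z ∉ L.lattice :=
  (Set.countable_coe_iff.1 (countable_lattice L)).ae_notMem volume

lemma ae_Utorus_vadd_zero (h1 : L.ω₁.im = 0) (harea : L.ω₁.re * L.ω₂.im = Real.pi / 2)
    (l : L.lattice) : ∀ᵐ z, Utorus L.ω₁ L.ω₂ (l +ᵥ z) 0 = Utorus L.ω₁ L.ω₂ z 0 := by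
  filter_upwards [ae_notMem_lattice L] with z hz
  rw [Submodule.vadd_def, vadd_eq_add, add_comm]
  exact Utorus_add_zero_of_mem_lattice h1 harea l.2 z hz

lemma locallyIntegrable_exp_mul_Utorus (h1 : L.ω₁.im = 0)
    (harea : L.ω₁.re * L.ω₂.im = Real.pi / 2) {γ : ℝ} (hγ : -2 < γ) (w : ℂ) :
    LocallyIntegrable fun z => Real.exp (γ * Utorus L.ω₁ L.ω₂ z w) := by
  have hzero : LocallyIntegrable fun z => Real.exp (γ * Utorus L.ω₁ L.ω₂ z 0) := by
    intro z
    by_cases hz : z ∈ L.lattice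
    · have hsing : IntegrableAtFilter (fun x => Real.exp (γ * Utorus L.ω₁ L.ω₂ x 0))
          (𝓝 (z - z)) := by
        rw [sub_self]
        exact integrableAtFilter_exp_mul_Utorus_zero hγ
      refine (integrableAtFilter_nhds_comp_sub_right hsing).congr ?_
      filter_upwards [ae_Utorus_vadd_zero h1 harea (-⟨z, hz⟩)] with x hx
      rw [← hx, Submodule.vadd_def, vadd_eq_add, NegMemClass.coe_neg, neg_add_eq_sub]
    · have hmeas := ((measurable_Utorus L 0).const_mul γ).exp.aestronglyMeasurable (μ := volume)
      have hcont := ((continuousAt_Utorus_zero hz).const_mul γ).rexp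
      exact hcont.tendsto.integrableAtFilter hmeas.stronglyMeasurableAtFilter
        (Measure.finiteAt_nhds volume z)
  intro z
  simp only [Utorus_eq_Utorus_sub _ _ _ w]
  exact integrableAtFilter_nhds_comp_sub_right (hzero (z - w))

lemma integrableOn_exp_mul_Utorus (h1 : L.ω₁.im = 0)
    (harea : L.ω₁.re * L.ω₂.im = Real.pi / 2) {γ : ℝ} (hγ : -2 < γ) (w : ℂ) :
    IntegrableOn (fun z => Real.exp (γ * Utorus L.ω₁ L.ω₂ z w)) (fundDomain L.ω₁ L.ω₂) :=
  ((locallyIntegrable_exp_mul_Utorus h1 harea hγ w).integrableOn_isCompact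
    (isBounded_fundDomain L).isCompact_closure).mono_set subset_closure

lemma integrableOn_Utorus (h1 : L.ω₁.im = 0) (harea : L.ω₁.re * L.ω₂.im = Real.pi / 2) (w : ℂ) :
    IntegrableOn (fun z => Utorus L.ω₁ L.ω₂ z w) (fundDomain L.ω₁ L.ω₂) := by
  refine ((integrableOn_exp_mul_Utorus h1 harea (γ := 1) (by norm_num) w).add
    (integrableOn_exp_mul_Utorus h1 harea (γ := -1) (by norm_num) w)).mono'
    (measurable_Utorus L w).aestronglyMeasurable (.of_forall fun z => ?_)
  simp only [Pi.add_apply, one_mul, neg_one_mul]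
  generalize Utorus L.ω₁ L.ω₂ z w = u
  rw [Real.norm_eq_abs, abs_le']
  constructor <;> linarith [Real.add_one_le_exp u, Real.add_one_le_exp (-u), Real.exp_pos u,
    Real.exp_pos (-u)]

end Integrability

/-! ### Jensen's inequality -/

section Jensen

variable {L : PeriodPair}

lemma setIntegral_comp_Utorus (h1 : L.ω₁.im = 0) (harea : L.ω₁.re * L.ω₂.im = Real.pi / 2)
    (φ : ℝ → ℝ) (w : ℂ) :
    ∫ z in fundDomain L.ω₁ L.ω₂, φ (Utorus L.ω₁ L.ω₂ z w) =
      ∫ z in fundDomain L.ω₁ L.ω₂, φ (Utorus L.ω₁ L.ω₂ z 0) := by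
  have := countable_lattice L
  have : VAddInvariantMeasure L.lattice ℂ volume :=
    inferInstanceAs (VAddInvariantMeasure L.lattice.toAddSubgroup ℂ volume)
  simp only [Utorus_eq_Utorus_sub _ _ _ w]
  exact setIntegral_comp_sub_right (f := fun z => φ (Utorus L.ω₁ L.ω₂ z 0))
    (isAddFundamentalDomain_fundDomain L)
    (fun l => (ae_Utorus_vadd_zero h1 harea l).mono fun _ hz => congrArg φ hz) w

lemma two_div_pi_mul_setIntegral_exp_mul_Utorus (h1 : L.ω₁.im = 0)
    (harea : L.ω₁.re * L.ω₂.im = Real.pi / 2) (γ : ℝ) (w : ℂ) :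
    2 / Real.pi * ∫ z in fundDomain L.ω₁ L.ω₂, Real.exp (γ * Utorus L.ω₁ L.ω₂ z w) =
      Etorus L.ω₁ L.ω₂ γ :=
  congrArg _ (setIntegral_comp_Utorus h1 harea (fun u => Real.exp (γ * u)) w)

lemma setIntegral_Utorus (h1 : L.ω₁.im = 0) (harea : L.ω₁.re * L.ω₂.im = Real.pi / 2) (w : ℂ) :
    ∫ z in fundDomain L.ω₁ L.ω₂, Utorus L.ω₁ L.ω₂ z w = 0 := by
  have hU := integrableOn_Utorus h1 harea 0
  have hfinite := volume_fundDomain_ne_top L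
  have hA : Aconst L.ω₁ L.ω₂ = 2 / Real.pi * ∫ z in fundDomain L.ω₁ L.ω₂,
      (Utorus L.ω₁ L.ω₂ z 0 + Aconst L.ω₁ L.ω₂) := by
    simp only [Utorus, sub_zero, sub_add_cancel]
    rfl
  rw [integral_add hU (integrableOn_const hfinite), mul_add,
    two_div_pi_mul_setIntegral_fundDomain h1 harea fun _ => Aconst L.ω₁ L.ω₂,
    setAverage_const (volume_fundDomain_ne_zero L) hfinite, right_eq_add] at hA
  rw [setIntegral_comp_Utorus h1 harea (fun u => u)]
  exact (mul_eq_zero.1 hA).resolve_left (by positivity)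

variable {ι : Type*} [Fintype ι]

lemma exp_mul_sum_le {p : ι → ℝ} (hp : ∀ j, 0 ≤ p j) (hsum : ∑ j, p j = 1) (γ : ℝ) (u : ι → ℝ) :
    Real.exp (γ * ∑ j, p j * u j) ≤ ∑ j, p j * Real.exp (γ * u j) := by
  have hjensen := convexOn_exp.map_sum_le (t := Finset.univ) (p := fun j => γ * u j)
    (fun j _ => hp j) hsum fun j _ => Set.mem_univ _
  simpa only [smul_eq_mul, mul_left_comm _ γ, ← Finset.mul_sum] using hjensen

lemma integrableOn_sum_mul_exp_mul_Utorus (h1 : L.ω₁.im = 0)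
    (harea : L.ω₁.re * L.ω₂.im = Real.pi / 2) {γ : ℝ} (hγ : -2 < γ) (p : ι → ℝ) (w : ι → ℂ) :
    IntegrableOn (fun z => ∑ j, p j * Real.exp (γ * Utorus L.ω₁ L.ω₂ z (w j)))
      (fundDomain L.ω₁ L.ω₂) :=
  integrable_finsetSum _ fun j _ => (integrableOn_exp_mul_Utorus h1 harea hγ (w j)).const_mul _

lemma integrableOn_exp_mul_sum_mul_Utorus (h1 : L.ω₁.im = 0)
    (harea : L.ω₁.re * L.ω₂.im = Real.pi / 2) {γ : ℝ} (hγ : -2 < γ) {p : ι → ℝ}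
    (hp : ∀ j, 0 ≤ p j) (hsum : ∑ j, p j = 1) (w : ι → ℂ) :
    IntegrableOn (fun z => Real.exp (γ * ∑ j, p j * Utorus L.ω₁ L.ω₂ z (w j)))
      (fundDomain L.ω₁ L.ω₂) := by
  have hmeas (j : ι) := measurable_Utorus L (w j)
  refine (integrableOn_sum_mul_exp_mul_Utorus h1 harea hγ p w).mono'
    (by fun_prop : Measurable _).aestronglyMeasurable (.of_forall fun z => ?_)
  rw [Real.norm_eq_abs, Real.abs_exp]
  exact exp_mul_sum_le hp hsum γ _

lemma one_le_setIntegral_exp_mul_sum_mul_Utorus (h1 : L.ω₁.im = 0)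
    (harea : L.ω₁.re * L.ω₂.im = Real.pi / 2) {γ : ℝ} (hγ : -2 < γ) {p : ι → ℝ}
    (hp : ∀ j, 0 ≤ p j) (hsum : ∑ j, p j = 1) (w : ι → ℂ) :
    1 ≤ 2 / Real.pi * ∫ z in fundDomain L.ω₁ L.ω₂,
      Real.exp (γ * ∑ j, p j * Utorus L.ω₁ L.ω₂ z (w j)) := by
  have hint (j : ι) := (integrableOn_Utorus h1 harea (w j)).const_mul (p j)
  have hmean : ⨍ z in fundDomain L.ω₁ L.ω₂, γ * ∑ j, p j * Utorus L.ω₁ L.ω₂ z (w j) = 0 := by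
    rw [← two_div_pi_mul_setIntegral_fundDomain h1 harea, integral_const_mul,
      integral_finsetSum _ fun j _ => hint j]
    simp only [integral_const_mul, setIntegral_Utorus h1 harea, mul_zero, Finset.sum_const_zero]
  have hjensen := convexOn_exp.map_set_average_le Real.continuous_exp.continuousOn isClosed_univ
    (volume_fundDomain_ne_zero L) (volume_fundDomain_ne_top L) (.of_forall fun _ => Set.mem_univ _)
    ((integrable_finsetSum _ fun j _ => hint j).const_mul γ)
    (integrableOn_exp_mul_sum_mul_Utorus h1 harea hγ hp hsum w)
  rwa [hmean, Real.exp_zero, ← two_div_pi_mul_setIntegral_fundDomain h1 harea] at hjensen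

lemma setIntegral_exp_mul_sum_mul_Utorus_le (h1 : L.ω₁.im = 0)
    (harea : L.ω₁.re * L.ω₂.im = Real.pi / 2) {γ : ℝ} (hγ : -2 < γ) {p : ι → ℝ}
    (hp : ∀ j, 0 ≤ p j) (hsum : ∑ j, p j = 1) (w : ι → ℂ) :
    2 / Real.pi * ∫ z in fundDomain L.ω₁ L.ω₂,
      Real.exp (γ * ∑ j, p j * Utorus L.ω₁ L.ω₂ z (w j)) ≤ Etorus L.ω₁ L.ω₂ γ := by
  calc 2 / Real.pi * ∫ z in fundDomain L.ω₁ L.ω₂,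
        Real.exp (γ * ∑ j, p j * Utorus L.ω₁ L.ω₂ z (w j))
      ≤ 2 / Real.pi * ∫ z in fundDomain L.ω₁ L.ω₂,
          ∑ j, p j * Real.exp (γ * Utorus L.ω₁ L.ω₂ z (w j)) :=
        mul_le_mul_of_nonneg_left
          (integral_mono (integrableOn_exp_mul_sum_mul_Utorus h1 harea hγ hp hsum w)
            (integrableOn_sum_mul_exp_mul_Utorus h1 harea hγ p w)
            fun z => exp_mul_sum_le hp hsum γ _) (by positivity)
    _ = ∑ j, p j * Etorus L.ω₁ L.ω₂ γ := by
        rw [integral_finsetSum _ fun j _ =>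
          (integrableOn_exp_mul_Utorus h1 harea hγ (w j)).const_mul _, Finset.mul_sum]
        simp only [integral_const_mul, mul_left_comm _ (p _),
          two_div_pi_mul_setIntegral_exp_mul_Utorus h1 harea]
    _ = Etorus L.ω₁ L.ω₂ γ := by rw [← Finset.sum_mul, hsum, one_mul]

end Jensen

lemma exists_periodPair {ω₁ ω₂ : ℂ} (h1 : ω₁.im = 0) (hne : ω₁.re * ω₂.im ≠ 0) :
    ∃ L : PeriodPair, L.ω₁ = ω₁ ∧ L.ω₂ = ω₂ := by
  obtain ⟨hre, him⟩ := mul_ne_zero_iff.1 hne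
  suffices LinearIndependent ℝ ![ω₁, ω₂] from ⟨⟨ω₁, ω₂, this⟩, rfl, rfl⟩
  rw [LinearIndependent.pair_iff]
  intro s t h
  obtain rfl : t = 0 := by simpa [h1, him] using congrArg Complex.im h
  exact ⟨by simpa [hre] using congrArg Complex.re h, rfl⟩

theorem torus_exp_sum_bounds_general {ι : Type*} [Fintype ι] (ω₁ ω₂ : ℂ) (h1 : ω₁.im = 0)
    (harea : ω₁.re * ω₂.im = Real.pi / 2) (γ : ℝ) (hγ : -2 < γ) (p : ι → ℝ) (hp : ∀ j, 0 ≤ p j)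
    (hsum : ∑ j, p j = 1) (w : ι → ℂ) :
    1 ≤ 2 / Real.pi *
        ∫ z in fundDomain ω₁ ω₂, Real.exp (γ * ∑ j, p j * Utorus ω₁ ω₂ z (w j)) ∧
    2 / Real.pi *
        ∫ z in fundDomain ω₁ ω₂, Real.exp (γ * ∑ j, p j * Utorus ω₁ ω₂ z (w j)) ≤
      Etorus ω₁ ω₂ γ ∧
    ((∀ j k, w j = w k) →
      2 / Real.pi *
          ∫ z in fundDomain ω₁ ω₂, Real.exp (γ * ∑ j, p j * Utorus ω₁ ω₂ z (w j)) =
        Etorus ω₁ ω₂ γ) := by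
  obtain ⟨L, rfl, rfl⟩ := exists_periodPair h1 (by rw [harea]; positivity)
  refine ⟨one_le_setIntegral_exp_mul_sum_mul_Utorus h1 harea hγ hp hsum w,
    setIntegral_exp_mul_sum_mul_Utorus_le h1 harea hγ hp hsum w, fun hw => ?_⟩
  obtain ⟨k, -, -⟩ := Finset.exists_ne_zero_of_sum_ne_zero (hsum.trans_ne one_ne_zero)
  simp only [hw _ k, ← Finset.sum_mul, hsum, one_mul]
  exact two_div_pi_mul_setIntegral_exp_mul_Utorus h1 harea γ (w k)

/-- bounds for the exponential of a sum of torus Green functions,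
with equality in the upper bound when all points coincide. -/
theorem torus_exp_sum_bounds (ω₁ ω₂ : ℂ)
    (h1 : ω₁.im = 0) (h1' : 0 < ω₁.re) (h2 : 0 < ω₂.im)
    (harea : ω₁.re * ω₂.im = Real.pi / 2)
    (N : ℕ) (hN : 1 ≤ N) (β : ℝ) (hβ : 0 < β) (w : Fin N → ℂ) :
    1 ≤ 2 / Real.pi *
        ∫ z in fundDomain ω₁ ω₂, Real.exp (∑ j, β * Utorus ω₁ ω₂ z (w j)) ∧
    2 / Real.pi *
        ∫ z in fundDomain ω₁ ω₂, Real.exp (∑ j, β * Utorus ω₁ ω₂ z (w j)) ≤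
      Etorus ω₁ ω₂ (β * N) ∧
    ((∀ j k, w j = w k) →
      2 / Real.pi *
          ∫ z in fundDomain ω₁ ω₂, Real.exp (∑ j, β * Utorus ω₁ ω₂ z (w j)) =
        Etorus ω₁ ω₂ (β * N)) := by
  have hN0 : (N : ℝ) ≠ 0 := Nat.cast_ne_zero.2 (Nat.one_le_iff_ne_zero.1 hN)
  simpa [← Finset.mul_sum, mul_assoc, hN0] using
    torus_exp_sum_bounds_general ω₁ ω₂ h1 harea (β * N) (by linarith [show 0 < β * N by positivity])
      (fun _ => (N : ℝ)⁻¹) (fun _ => by positivity) (by simp [hN0]) w
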